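/- Let G be a 3-pyramid free 2-tree on at least 3 vertices and let uv ∈ E(G) be an edge with |N_G(u) ∩ N_G(v)| = 1. Then G has a Hamiltonian path whose endpoints are u and v. -/

import Mathlib

/-!
A 2-tree in which every edge lies in at most two triangles is a triangulated polygon, and the edges
lying in exactly one triangle are the sides of that polygon. Going around the polygon the long way
from one endpoint of a side to the other is the desired Hamiltonian path.

Since 2-trees contain no `K₄` (`not_k4`), three common neighbours of an edge are pairwise
non-adjacent and span an induced 3-pyramid with it; so 3-pyramid freeness forces every edge
to lie in at most two triangles (`atMostTwo_of_free`).

The path is built along the inductive construction, with the stronger claim `exists_path` that it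
uses every outer edge (edge in at most one triangle) other than the one joining its endpoints. When
a vertex `z` is glued onto an edge `ab`, the edge `ab` was outer, so the old path for an outer edge
`uv ≠ ab` runs through `ab`, and one reroutes it as `a z b` (`reroute`); for the new sides `za` and
`zb` one extends the path from `a` to `b` by one edge. The edge `ab` itself remains outer only if it
lay in no triangle before, in which case the old 2-tree was a single edge (`support_eq_pair`)
and `a z b` is the whole path.
-/


open SimpleGraph

/-- `IsTwoTree V G` : the simple graph `G` on `ℕ` with support (vertex set) `V` is a 2-tree,
defined inductively: a single edge is a 2-tree, and adding a new vertex `z` adjacent to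
exactly the two endpoints `u, v` of an existing edge yields a 2-tree. -/
inductive IsTwoTree : Finset ℕ → SimpleGraph ℕ → Prop
  | base (u v : ℕ) (huv : u ≠ v) :
      IsTwoTree {u, v} (fromEdgeSet {s(u, v)})
  | grow {V : Finset ℕ} {G : SimpleGraph ℕ} (hG : IsTwoTree V G)
      (u v z : ℕ) (huv : G.Adj u v) (hz : z ∉ V) (hzu : z ≠ u) (hzv : z ≠ v) :
      IsTwoTree (insert z V) (G ⊔ fromEdgeSet {s(z, u), s(z, v)})


/-- `H` (with vertex set `W`) is an `n`-pyramid: a 2-tree on `n + 2` vertices having an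
edge `uv` such that `u` and `v` have exactly `n` common neighbors. -/
def IsNPyramid (n : ℕ) (W : Finset ℕ) (H : SimpleGraph ℕ) : Prop :=
  IsTwoTree W H ∧ W.card = n + 2 ∧
    ∃ u v, H.Adj u v ∧ (H.neighborSet u ∩ H.neighborSet v).ncard = n

/-- `G` (with vertex set `V`) contains an `n`-pyramid as an induced subgraph: there is a
set of vertices `W ⊆ V` on which `G` induces an `n`-pyramid. -/
def ContainsNPyramid (V : Finset ℕ) (G : SimpleGraph ℕ) (n : ℕ) : Prop :=
  ∃ (W : Finset ℕ) (H : SimpleGraph ℕ), W ⊆ V ∧ IsNPyramid n W H ∧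
    ∀ a b, a ∈ W → b ∈ W → (G.Adj a b ↔ H.Adj a b)

/-- `p` is a Hamiltonian path of the graph `G` with vertex set `V`: a path whose support
is exactly `V`. -/
def IsHamPathOn (V : Finset ℕ) {G : SimpleGraph ℕ} {s t : ℕ} (p : G.Walk s t) : Prop :=
  p.IsPath ∧ ∀ x, x ∈ p.support ↔ x ∈ V

/-- `p` is a Hamiltonian cycle of the graph `G` with vertex set `V`: a cycle whose support
is exactly `V`. -/
def IsHamCycleOn (V : Finset ℕ) {G : SimpleGraph ℕ} {a : ℕ} (p : G.Walk a a) : Prop :=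
  p.IsCycle ∧ ∀ x, x ∈ p.support ↔ x ∈ V

/-! ### Outer edges -/

/-- `u` and `v` are adjacent and have at most one common neighbour. -/
def OuterEdge (G : SimpleGraph ℕ) (u v : ℕ) : Prop :=
  G.Adj u v ∧ ∀ x y, G.Adj u x → G.Adj v x → G.Adj u y → G.Adj v y → x = y

/-- No edge of `G` lies in three distinct triangles. -/
def AtMostTwo (G : SimpleGraph ℕ) : Prop :=
  ∀ u v x y w, G.Adj u v → G.Adj u x → G.Adj v x → G.Adj u y → G.Adj v y →
    G.Adj u w → G.Adj v w → x = y ∨ y = w ∨ x = w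

lemma OuterEdge.symm {G : SimpleGraph ℕ} {u v : ℕ} (h : OuterEdge G u v) : OuterEdge G v u :=
  ⟨h.1.symm, fun x y h1 h2 h3 h4 => h.2 x y h2 h1 h4 h3⟩

lemma OuterEdge.mono {G G' : SimpleGraph ℕ} (hle : G ≤ G') {u v : ℕ} (h : OuterEdge G' u v)
    (huv : G.Adj u v) : OuterEdge G u v :=
  ⟨huv, fun x y h1 h2 h3 h4 => h.2 x y (hle h1) (hle h2) (hle h3) (hle h4)⟩

lemma AtMostTwo.mono {G G' : SimpleGraph ℕ} (hle : G ≤ G') (h : AtMostTwo G') : AtMostTwo G :=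
  fun u v x y w h0 h1 h2 h3 h4 h5 h6 =>
    h u v x y w (hle h0) (hle h1) (hle h2) (hle h3) (hle h4) (hle h5) (hle h6)

/-! ### Structure of 2-trees -/

lemma grow_adj {G : SimpleGraph ℕ} {a b z : ℕ} (hza : z ≠ a) (hzb : z ≠ b) (x y : ℕ) :
    (G ⊔ fromEdgeSet {s(z, a), s(z, b)}).Adj x y ↔
      G.Adj x y ∨ (x = z ∧ (y = a ∨ y = b)) ∨ (y = z ∧ (x = a ∨ x = b)) := by
  simp only [sup_adj, fromEdgeSet_adj, Set.mem_insert_iff, Set.mem_singleton_iff, Sym2.eq_iff]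
  grind

lemma pair_adj {a b : ℕ} (hab : a ≠ b) (x y : ℕ) :
    (fromEdgeSet {s(a, b)}).Adj x y ↔ (x = a ∧ y = b) ∨ (x = b ∧ y = a) := by
  simp only [fromEdgeSet_adj, Set.mem_singleton_iff, Sym2.eq_iff]
  grind

lemma IsTwoTree.mem_of_adj {V : Finset ℕ} {G : SimpleGraph ℕ} (hG : IsTwoTree V G) :
    ∀ {x y : ℕ}, G.Adj x y → x ∈ V := by
  induction hG with
  | base a b hab => intro x y h; rw [pair_adj hab] at h; simp; tauto
  | @grow V G hG a b z hab hz hza hzb ih =>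
    intro x y h
    rw [grow_adj hza hzb] at h
    have h1 := ih hab
    have h2 := ih hab.symm
    rcases h with h | h | h
    · exact Finset.mem_insert_of_mem (ih h)
    · simp [h.1]
    · rcases h.2 with rfl | rfl <;> simp [*]

lemma not_k4 {V : Finset ℕ} {G : SimpleGraph ℕ} (hG : IsTwoTree V G) :
    ∀ w x y t : ℕ, G.Adj w x → G.Adj w y → G.Adj w t → G.Adj x y → G.Adj x t → ¬ G.Adj y t := by
  induction hG with
  | base a b hab =>
    intro w x y t
    simp only [pair_adj hab]
    grind
  | @grow V G hG a b z hab hz hza hzb ih =>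
    intro w x y t h1 h2 h3 h4 h5 h6
    have hzl : ∀ q, ¬ G.Adj z q := fun q h => hz (hG.mem_of_adj h)
    have hzr : ∀ q, ¬ G.Adj q z := fun q h => hz (hG.mem_of_adj h.symm)
    have n1 := h1.ne
    have n2 := h2.ne
    have n3 := h3.ne
    have n4 := h4.ne
    have n5 := h5.ne
    have n6 := h6.ne
    rw [grow_adj hza hzb] at h1 h2 h3 h4 h5 h6
    have := ih w x y t
    grind

/-- A 2-tree with an edge in no triangle is that single edge. -/
lemma support_eq_pair {V : Finset ℕ} {G : SimpleGraph ℕ} (hG : IsTwoTree V G) :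
    ∀ u v : ℕ, G.Adj u v → (∀ x, G.Adj u x → ¬ G.Adj v x) → V = {u, v} := by
  induction hG with
  | base a b hab =>
    intro u v h
    rw [pair_adj hab] at h
    rcases h with ⟨rfl, rfl⟩ | ⟨rfl, rfl⟩ <;> simp [Finset.pair_comm]
  | @grow V G hG a b z hab hz hza hzb ih =>
    intro u v h hx
    exfalso
    have ha := hG.mem_of_adj hab
    have hb := hG.mem_of_adj hab.symm
    have hba := hab.symm
    have hne := hab.ne
    simp only [grow_adj hza hzb] at h hx
    have h1 := ih u v
    have hxa := hx a
    have hxb := hx b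
    have hxz := hx z
    by_cases hG' : G.Adj u v
    · have hV := h1 hG' (fun x h1 h2 => hx x (Or.inl h1) (Or.inl h2))
      rw [hV] at ha hb
      simp only [Finset.mem_insert, Finset.mem_singleton] at ha hb
      grind
    · grind

/-- The explicit 3-pyramid on the edge `uv` with apices `x`, `y`, `w` is an induced subgraph. -/
lemma atMostTwo_of_free {V : Finset ℕ} {G : SimpleGraph ℕ} (hG : IsTwoTree V G)
    (h3 : ¬ ContainsNPyramid V G 3) : AtMostTwo G := by
  intro u v x y w huv hux hvx huy hvy huw hvw
  by_contra! hne
  obtain ⟨hxy, hyw, hxw⟩ := hne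
  have n1 := huv.ne
  have n2 := hux.ne
  have n3 := hvx.ne
  have n4 := huy.ne
  have n5 := hvy.ne
  have n6 := huw.ne
  have n7 := hvw.ne
  have k1 := not_k4 hG u v x y huv hux huy hvx hvy
  have k2 := not_k4 hG u v y w huv huy huw hvy hvw
  have k3 := not_k4 hG u v x w huv hux huw hvx hvw
  have k1' := fun h : G.Adj y x => k1 h.symm
  have k2' := fun h : G.Adj w y => k2 h.symm
  have k3' := fun h : G.Adj w x => k3 h.symm
  have t0 := IsTwoTree.base u v n1
  have t1 := t0.grow u v x (by simp [n1]) (by simp; grind) n2.symm n3.symm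
  have t2 := t1.grow u v y (by simp [n1]) (by simp; grind) n4.symm n5.symm
  have t3 := t2.grow u v w (by simp [n1]) (by simp; grind) n6.symm n7.symm
  refine h3 ⟨_, _, ?_, ⟨t3, ?_, u, v, by simp [n1], ?_⟩, ?_⟩
  · intro q hq
    simp only [Finset.mem_insert, Finset.mem_singleton] at hq
    rcases hq with rfl | rfl | rfl | rfl | rfl
    exacts [hG.mem_of_adj huw.symm, hG.mem_of_adj huy.symm, hG.mem_of_adj hux.symm,
      hG.mem_of_adj huv, hG.mem_of_adj huv.symm]
  · rw [Finset.card_insert_of_notMem (by simp; grind), Finset.card_insert_of_notMem (by simp; grind),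
      Finset.card_insert_of_notMem (by simp; grind), Finset.card_pair n1]
  · rw [Set.ncard_eq_three]
    refine ⟨x, y, w, hxy, hxw, hyw, ?_⟩
    ext q
    simp only [Set.mem_inter_iff, mem_neighborSet, grow_adj n6.symm n7.symm,
      grow_adj n4.symm n5.symm, grow_adj n2.symm n3.symm, pair_adj n1, Set.mem_insert_iff,
      Set.mem_singleton_iff]
    grind
  · intro p q hp hq
    simp only [Finset.mem_insert, Finset.mem_singleton] at hp hq
    simp only [grow_adj n6.symm n7.symm, grow_adj n4.symm n5.symm, grow_adj n2.symm n3.symm,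
      pair_adj n1]
    have := huv.symm
    have := hux.symm
    have := hvx.symm
    have := huy.symm
    have := hvy.symm
    have := huw.symm
    have := hvw.symm
    have := G.loopless.irrefl
    rcases hp with rfl | rfl | rfl | rfl | rfl <;> rcases hq with rfl | rfl | rfl | rfl | rfl <;>
      simp [*] <;> grind

/-- When `G` is the single edge `uv`, every walk from `u` to `v` starts with this edge. -/
lemma mem_edges_of_pair {V : Finset ℕ} {G : SimpleGraph ℕ} (hG : IsTwoTree V G) {u v : ℕ}
    (hV : V = {u, v}) (huv : u ≠ v) (p : G.Walk u v) : s(u, v) ∈ p.edges := by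
  cases p with
  | nil => exact absurd rfl huv
  | @cons _ w _ h q =>
    have hw : w ∈ V := hG.mem_of_adj h.symm
    rw [hV, Finset.mem_insert, Finset.mem_singleton] at hw
    simp [hw.resolve_left h.ne']

/-! ### Hamiltonian paths -/

/-- An edge `ab` of a path can be replaced by a detour `a z b` through a new vertex `z`. -/
lemma reroute {G G' : SimpleGraph ℕ} (hle : G ≤ G') {a b z : ℕ} (haz : G'.Adj a z)
    (hbz : G'.Adj b z) {u v : ℕ} (p : G.Walk u v) (hp : p.IsPath) (hz : z ∉ p.support)
    (hab : s(a, b) ∈ p.edges) :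
    ∃ q : G'.Walk u v, q.IsPath ∧ (∀ x, x ∈ q.support ↔ x = z ∨ x ∈ p.support) ∧
      s(a, z) ∈ q.edges ∧ s(b, z) ∈ q.edges ∧
      ∀ e ∈ p.edges, e ≠ s(a, b) → e ∈ q.edges := by
  induction p with
  | nil => simp at hab
  | @cons u w v h p ih =>
    rw [Walk.cons_isPath_iff] at hp
    rw [Walk.support_cons, List.mem_cons, not_or] at hz
    by_cases he : s(a, b) = s(u, w)
    · have huz : G'.Adj u z := by
        rcases Sym2.eq_iff.1 he with ⟨rfl, rfl⟩ | ⟨rfl, rfl⟩ <;> assumption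
      have hzw : G'.Adj z w := by
        rcases Sym2.eq_iff.1 he with ⟨rfl, rfl⟩ | ⟨rfl, rfl⟩ <;> exact SimpleGraph.Adj.symm ‹_›
      refine ⟨.cons huz (.cons hzw (p.mapLe hle)), ?_, ?_, ?_, ?_, ?_⟩
      · simp only [Walk.cons_isPath_iff, Walk.support_cons, Walk.support_mapLe_eq_support,
          Walk.isPath_mapLe, List.mem_cons, not_or]
        exact ⟨⟨hp.1, hz.2⟩, huz.ne, hp.2⟩
      · intro x
        simp only [Walk.support_cons, Walk.support_mapLe_eq_support, List.mem_cons]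
        tauto
      · rcases Sym2.eq_iff.1 he with ⟨rfl, rfl⟩ | ⟨rfl, rfl⟩ <;> simp [Sym2.eq_swap]
      · rcases Sym2.eq_iff.1 he with ⟨rfl, rfl⟩ | ⟨rfl, rfl⟩ <;> simp [Sym2.eq_swap]
      · intro e h1 h2
        simp only [Walk.edges_cons, List.mem_cons, Walk.edges_mapLe_eq_edges] at h1 ⊢
        grind
    · rw [Walk.edges_cons, List.mem_cons] at hab
      obtain ⟨q, h1, h2, h3, h4, h5⟩ := ih hp.1 hz.2 (hab.resolve_left he)
      refine ⟨.cons (hle h) q, ?_, ?_, ?_, ?_, ?_⟩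
      · rw [Walk.cons_isPath_iff, h2]
        exact ⟨h1, fun h => h.elim (fun h => hz.1 h.symm) hp.2⟩
      · intro x
        simp only [Walk.support_cons, List.mem_cons, h2]
        tauto
      · simp [h3]
      · simp [h4]
      · intro e h1 h2
        simp only [Walk.edges_cons, List.mem_cons] at h1 ⊢
        exact h1.imp id (fun h => h5 e h h2)

/-- If no edge lies in three triangles, then for every outer edge `uv` there is a Hamiltonian path
from `u` to `v` which runs through all other outer edges. The single edge `uv` is included. -/
lemma exists_path {V : Finset ℕ} {G : SimpleGraph ℕ} (hG : IsTwoTree V G) :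
    AtMostTwo G → ∀ u v, OuterEdge G u v →
      ∃ p : G.Walk u v, IsHamPathOn V p ∧
        ∀ s t, OuterEdge G s t → s(s, t) ≠ s(u, v) → s(s, t) ∈ p.edges := by
  induction hG with
  | base a b hab =>
    intro _ u v h
    refine ⟨h.1.toWalk, ⟨by simpa [Walk.cons_isPath_iff] using h.1.ne, ?_⟩, ?_⟩
    · intro x
      have := (pair_adj hab u v).1 h.1
      simp only [SimpleGraph.Adj.toWalk, Walk.support_cons, Walk.support_nil, List.mem_cons,
        List.not_mem_nil, or_false, Finset.mem_insert, Finset.mem_singleton]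
      grind
    · intro s t hst hne
      have h1 := (pair_adj hab u v).1 h.1
      have h2 := (pair_adj hab s t).1 hst.1
      rw [ne_eq, Sym2.eq_iff] at hne
      grind
  | @grow V G hG a b z hab hz hza hzb ih =>
    intro h2
    set G' := G ⊔ fromEdgeSet {s(z, a), s(z, b)} with hG'
    have hle : G ≤ G' := le_sup_left
    have adj : ∀ x y, G'.Adj x y ↔
        G.Adj x y ∨ (x = z ∧ (y = a ∨ y = b)) ∨ (y = z ∧ (x = a ∨ x = b)) :=
      grow_adj hza hzb
    have haz : G'.Adj a z := by rw [adj]; tauto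
    have hbz : G'.Adj b z := by rw [adj]; tauto
    have hab' : OuterEdge G a b := by
      refine ⟨hab, fun x y h3 h4 h5 h6 => ?_⟩
      have hx : x ≠ z := fun h => hz (h ▸ hG.mem_of_adj h3.symm)
      have hy : y ≠ z := fun h => hz (h ▸ hG.mem_of_adj h5.symm)
      have := h2 a b x y z (hle hab) (hle h3) (hle h4) (hle h5) (hle h6) haz hbz
      tauto
    replace ih := ih (h2.mono hle)
    -- If `ab` (here `cd`) is still outer after adding `z`, it lay in no triangle before.
    have pair : ∀ s t c d, OuterEdge G' s t → s(s, t) = s(c, d) → s(c, d) = s(a, b) →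
        V = {c, d} := by
      intro s t c d hst he he'
      have hcd : G.Adj c d := by rwa [← mem_edgeSet, he', mem_edgeSet]
      refine support_eq_pair hG c d hcd fun x hcx hdx => hz ?_
      have hcz : G'.Adj c z ∧ G'.Adj d z := by
        rcases Sym2.eq_iff.1 he' with ⟨rfl, rfl⟩ | ⟨rfl, rfl⟩ <;> exact ⟨‹_›, ‹_›⟩
      have hxz : x = z := by
        rcases Sym2.eq_iff.1 he with ⟨rfl, rfl⟩ | ⟨rfl, rfl⟩
        · exact hst.2 x z (hle hcx) (hle hdx) hcz.1 hcz.2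
        · exact hst.2 x z (hle hdx) (hle hcx) hcz.2 hcz.1
      exact hxz ▸ hG.mem_of_adj hcx.symm
    -- The new sides `za` and `zb` are treated together: `c` is the endpoint, `d` the other vertex.
    have key : ∀ c d, OuterEdge G d c → G'.Adj z d → s(c, d) = s(a, b) →
        ∃ p : G'.Walk z c, IsHamPathOn (insert z V) p ∧
          ∀ s t, OuterEdge G' s t → s(s, t) ≠ s(z, c) → s(s, t) ∈ p.edges := by
      intro c d hcd hzd he
      obtain ⟨p, ⟨hp1, hp2⟩, hp3⟩ := ih d c hcd
      refine ⟨.cons hzd (p.mapLe hle), ⟨?_, ?_⟩, ?_⟩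
      · simp only [Walk.cons_isPath_iff, Walk.support_mapLe_eq_support, Walk.isPath_mapLe, hp2]
        exact ⟨hp1, hz⟩
      · intro x
        simp [hp2]
      · intro s t hst hne
        simp only [Walk.edges_cons, List.mem_cons, Walk.edges_mapLe_eq_edges]
        by_cases hG'' : G.Adj s t
        · right
          by_cases h : s(s, t) = s(d, c)
          · -- `G` is the single edge `dc`, which is the first step of `p`.
            rw [h]
            exact mem_edges_of_pair hG (pair s t d c hst h (by rw [← he, Sym2.eq_swap])) hcd.1.ne p
          · exact hp3 s t (hst.mono hle hG'') h
        · left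
          have h4 := (adj s t).1 hst.1
          rw [Sym2.eq_iff] at he ⊢
          rw [ne_eq, Sym2.eq_iff] at hne
          grind
    have key' : ∀ v, G'.Adj z v →
        ∃ p : G'.Walk z v, IsHamPathOn (insert z V) p ∧
          ∀ s t, OuterEdge G' s t → s(s, t) ≠ s(z, v) → s(s, t) ∈ p.edges := by
      intro v h
      have hv : v = a ∨ v = b := by
        rcases (adj z v).1 h with h | h | h
        · exact absurd (hG.mem_of_adj h) hz
        · exact h.2
        · exact absurd h.2 (by tauto)
      rcases hv with rfl | rfl
      · exact key v b hab'.symm hbz.symm rfl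
      · exact key v a hab' haz.symm Sym2.eq_swap
    intro u v huv
    by_cases huz : u = z
    · subst huz
      exact key' v huv.1
    by_cases hvz : v = z
    · subst hvz
      obtain ⟨p, ⟨hp1, hp2⟩, hp3⟩ := key' u huv.1.symm
      refine ⟨p.reverse, ⟨hp1.reverse, by simpa using hp2⟩, fun s t hst hne => ?_⟩
      simpa using hp3 s t hst (by rwa [Sym2.eq_swap (a := v)])
    have huvG : G.Adj u v := by have := (adj u v).1 huv.1; tauto
    -- The path for `uv` in `G` runs through `ab`, also when `uv = ab`; reroute it through `z`.
    obtain ⟨p, ⟨hp1, hp2⟩, hp3⟩ := ih u v (huv.mono hle huvG)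
    have hmem : s(a, b) ∈ p.edges := by
      by_cases he : s(u, v) = s(a, b)
      · rw [← he]
        exact mem_edges_of_pair hG (pair u v u v huv rfl he) huvG.ne p
      · exact hp3 a b hab' (Ne.symm he)
    obtain ⟨q, hq1, hq2, hq3, hq4, hq5⟩ :=
      reroute hle haz hbz p hp1 (fun h => hz ((hp2 z).1 h)) hmem
    refine ⟨q, ⟨hq1, fun x => by rw [hq2, hp2, Finset.mem_insert]⟩, fun s t hst hne => ?_⟩
    by_cases hG'' : G.Adj s t
    · have hne' : s(s, t) ≠ s(a, b) := fun h => hne <| by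
        have hV := pair s t a b hst h rfl
        have hu := hG.mem_of_adj huvG
        have hv := hG.mem_of_adj huvG.symm
        have := huvG.ne
        rw [hV, Finset.mem_insert, Finset.mem_singleton] at hu hv
        rw [h, Sym2.eq_iff]
        grind
      exact hq5 _ (hp3 s t (hst.mono hle hG'') hne) hne'
    · have h4 := (adj s t).1 hst.1
      have hq3' := hq3
      have hq4' := hq4
      rw [Sym2.eq_swap] at hq3' hq4'
      grind

/-- Let `G` be a 3-pyramid free 2-tree on at least 3 vertices and `uv` an edge with
`|N_G(u) ∩ N_G(v)| = 1`.  Then `G` has a Hamiltonian path with endpoints `u` and `v`. -/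
theorem hamiltonian_path_between_endpoints
    (V : Finset ℕ) (G : SimpleGraph ℕ) (hG : IsTwoTree V G) (hcard : 3 ≤ V.card)
    (h3 : ¬ ContainsNPyramid V G 3)
    (u v : ℕ) (huv : G.Adj u v)
    (h1 : (G.neighborSet u ∩ G.neighborSet v).ncard = 1) :
    ∃ p : G.Walk u v, IsHamPathOn V p := by
  obtain ⟨c, hc⟩ := Set.ncard_eq_one.1 h1
  obtain ⟨p, hp, -⟩ := exists_path hG (atMostTwo_of_free hG h3) u v
    ⟨huv, fun x y hx hx' hy hy' => by
      have h4 : x ∈ G.neighborSet u ∩ G.neighborSet v := ⟨hx, hx'⟩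
      have h5 : y ∈ G.neighborSet u ∩ G.neighborSet v := ⟨hy, hy'⟩
      rw [hc] at h4 h5
      exact h4.trans h5.symm⟩
  exact ⟨p, hp⟩
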